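/- Let H be a simple graph whose connected components are H_1, H_2, …, H_q. Then φ(K1∇H) = φ(K1∇H_1) + φ(K1∇H_2) + ⋯ + φ(K1∇H_q). -/

import Mathlib

open scoped Classical

namespace PaperEDC

/-- `G` contains `m` pairwise edge-disjoint cycles. -/
def HasEDC {V : Type*} (G : SimpleGraph V) (m : ℕ) : Prop :=
  ∃ c : Fin m → Σ v : V, G.Walk v v,
    (∀ i, (c i).2.IsCycle) ∧
    ∀ i j, i ≠ j → ∀ e ∈ (c i).2.edges, e ∉ (c j).2.edges

/-- `φ(G)`: the maximum number of pairwise edge-disjoint cycles in `G`. -/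
noncomputable def phi {V : Type*} (G : SimpleGraph V) : ℕ := sSup {m | HasEDC G m}

/-- `K₁ ∇ H`: the join of a single new vertex with `H`. -/
def joinK1 {V : Type*} (H : SimpleGraph V) : SimpleGraph (Option V) :=
  SimpleGraph.fromRel fun a b => a = none ∨ ∃ u v, a = some u ∧ b = some v ∧ H.Adj u v

/-- `t(G)`: the number of triangles of `G`. -/
noncomputable def triCount {V : Type*} (G : SimpleGraph V) : ℕ :=
  Nat.card {s : Finset V // G.IsNClique 3 s}

/-- A triangle-cactus: a connected graph in which every edge lies on a cycle and every
cycle is a triangle. -/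
def IsTriangleCactus {V : Type*} (G : SimpleGraph V) : Prop :=
  G.Connected ∧
  (∀ e ∈ G.edgeSet, ∃ (v : V) (w : G.Walk v v), w.IsCycle ∧ e ∈ w.edges) ∧
  ∀ (v : V) (w : G.Walk v v), w.IsCycle → w.length = 3

/-- `e(G)`: the number of edges of `G`. -/
noncomputable def ecard {V : Type*} (G : SimpleGraph V) : ℕ := Nat.card G.edgeSet

/-- `ρ(G)`: the spectral radius (largest adjacency eigenvalue) of `G`. -/
noncomputable def specRad {V : Type*} [Fintype V] (G : SimpleGraph V) : ℝ :=
  sSup {x : ℝ | ∃ f : V → ℝ, f ≠ 0 ∧ ∀ v : V, ∑ u : V, (if G.Adj v u then f u else 0) = x * f v}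

theorem adj_some {V : Type*} (H : SimpleGraph V) (u v : V) :
    (joinK1 H).Adj (some u) (some v) ↔ H.Adj u v := by
  simp only [joinK1, SimpleGraph.fromRel_adj]
  constructor
  · rintro ⟨_, (h | ⟨a, b, h1, h2, h⟩) | (h | ⟨a, b, h1, h2, h⟩)⟩
    · simp at h
    · cases h1; cases h2; exact h
    · simp at h
    · cases h1; cases h2; exact h.symm
  · intro h
    exact ⟨by simpa using h.ne, Or.inl (Or.inr ⟨u, v, rfl, rfl, h⟩)⟩

theorem adj_none {V : Type*} (H : SimpleGraph V) (x : Option V) :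
    (joinK1 H).Adj none x ↔ x ≠ none := by
  simp only [joinK1, SimpleGraph.fromRel_adj]
  constructor
  · rintro ⟨h, _⟩; exact h.symm
  · intro h; exact ⟨h.symm, Or.inl (by simp)⟩

/-- The inclusion of the cone over an induced subgraph. -/
def incl {V : Type*} (H : SimpleGraph V) (s : Set V) :
    joinK1 (H.induce s) →g joinK1 H where
  toFun := Option.map Subtype.val
  map_rel' := by
    intro a b h
    cases a with
    | none =>
      rw [adj_none] at h
      simp only [Option.map_none, adj_none]
      simpa using h
    | some a =>
      cases b with
      | none => exact ((adj_none H _).2 (by simp)).symm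
      | some b =>
        rw [adj_some] at h
        exact (adj_some H _ _).2 h

theorem incl_inj {V : Type*} (H : SimpleGraph V) (s : Set V) :
    Function.Injective (incl H s) :=
  Option.map_injective Subtype.val_injective

theorem incl_reflect {V : Type*} (H : SimpleGraph V) (s : Set V) (a b : Option s)
    (h : (joinK1 H).Adj (incl H s a) (incl H s b)) : (joinK1 (H.induce s)).Adj a b := by
  cases a with
  | none =>
    rw [adj_none]
    rintro rfl
    exact h.ne rfl
  | some a =>
    cases b with
    | none => exact ((adj_none _ _).2 (by simp)).symm
    | some b => exact (adj_some _ _ _).2 ((adj_some H a.1 b.1).1 h)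

theorem lift_walk {V : Type*} (H : SimpleGraph V) (s : Set V) {x y : Option V}
    (w : (joinK1 H).Walk x y) (hw : ∀ u, some u ∈ w.support → u ∈ s) :
    ∀ (a b : Option s) (ha : incl H s a = x) (hb : incl H s b = y),
      ∃ w' : (joinK1 (H.induce s)).Walk a b, (w'.map (incl H s)).copy ha hb = w := by
  induction w with
  | nil =>
    intro a b ha hb
    obtain rfl := incl_inj H s (ha.trans hb.symm)
    subst ha
    exact ⟨.nil, rfl⟩
  | @cons x z y h p ih =>
    intro a b ha hb
    have hz : ∃ d : Option s, incl H s d = z := by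
      cases z with
      | none => exact ⟨none, rfl⟩
      | some z => exact ⟨some ⟨z, hw z (by simp)⟩, rfl⟩
    obtain ⟨d, hd⟩ := hz
    obtain ⟨w', hw'⟩ := ih (fun u hu => hw u (by simp [hu])) d b hd hb
    subst ha; subst hb; subst hd
    subst hw'
    exact ⟨.cons (incl_reflect H s _ _ h) w', rfl⟩

theorem reach_path {V : Type*} (H : SimpleGraph V) {x y : Option V}
    (p : (joinK1 H).Walk x y) (hp : p.IsPath) (hy : y = none ∨ none ∉ p.support) :
    ∀ v, x = some v → ∀ u, some u ∈ p.support → H.Reachable v u := by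
  induction p with
  | nil =>
    rintro v rfl u hu
    simp at hu
    subst hu
    exact .refl _
  | @cons x z y h p ih =>
    rintro v rfl u hu
    rw [SimpleGraph.Walk.cons_isPath_iff] at hp
    simp only [SimpleGraph.Walk.support_cons, List.mem_cons, Option.some.injEq] at hu
    rcases hu with rfl | hu
    · exact .refl _
    cases z with
    | none =>
      rcases hy with rfl | hy
      · have := SimpleGraph.Walk.nil_iff_eq_nil.1 (SimpleGraph.Walk.isPath_iff_nil.1 hp.1)
        subst this
        simp at hu
      · simp at hy
    | some z =>
      have h1 := ih hp.1 (hy.imp id (fun h h' => h (by simp [h']))) z rfl u hu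
      exact ((adj_some H v z).1 h).reachable.trans h1

theorem cycle_comp {V : Type*} (H : SimpleGraph V) {x : Option V}
    (w : (joinK1 H).Walk x x) (hw : w.IsCycle) :
    ∃ c : H.ConnectedComponent, ∀ u, some u ∈ w.support → u ∈ c.supp := by
  by_cases hn : none ∈ w.support
  · have hr := hw.rotate hn
    suffices h : ∃ c : H.ConnectedComponent, ∀ u, some u ∈ (w.rotate none hn).support → u ∈ c.supp by
      obtain ⟨c, hc⟩ := h
      refine ⟨c, fun u hu => hc u ?_⟩
      simpa [SimpleGraph.Walk.mem_support_rotate_iff] using hu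
    generalize w.rotate none hn = w' at hr
    cases w' with
    | nil => exact absurd rfl hr.ne_nil
    | @cons _ z _ h p =>
      rw [SimpleGraph.Walk.cons_isCycle_iff] at hr
      cases z with
      | none => exact absurd rfl h.ne
      | some z =>
        refine ⟨H.connectedComponentMk z, fun u hu => ?_⟩
        simp at hu
        exact SimpleGraph.ConnectedComponent.sound
          (reach_path H p hr.1 (Or.inl rfl) z rfl u hu).symm
  · cases w with
    | nil => exact absurd rfl hw.ne_nil
    | @cons _ z _ h p =>
      rw [SimpleGraph.Walk.cons_isCycle_iff] at hw
      cases z with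
      | none => simp at hn
      | some z =>
        refine ⟨H.connectedComponentMk z, fun u hu => ?_⟩
        have hu' : some u ∈ p.support := by
          simp at hu
          rcases hu with rfl | hu
          · exact p.end_mem_support
          · exact hu
        exact SimpleGraph.ConnectedComponent.sound
          (reach_path H p hw.1 (Or.inr (fun h' => hn (by simp [h']))) z rfl u hu').symm

theorem cycle_edge {V : Type*} {G : SimpleGraph V} {x : V} (w : G.Walk x x)
    (hw : w.IsCycle) : ∃ e, e ∈ w.edges := by
  cases w with
  | nil => exact absurd rfl hw.ne_nil
  | cons h p => exact ⟨_, by simp only [SimpleGraph.Walk.edges_cons]; exact List.mem_cons_self⟩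

theorem edc_of_fintype {V ι : Type*} [Fintype ι] (G : SimpleGraph V)
    (c : ι → Σ v : V, G.Walk v v) (h1 : ∀ i, (c i).2.IsCycle)
    (h2 : ∀ i j, i ≠ j → ∀ e ∈ (c i).2.edges, e ∉ (c j).2.edges) :
    HasEDC G (Fintype.card ι) :=
  ⟨fun i => c ((Fintype.equivFin ι).symm i), fun i => h1 _, fun i j hij =>
    h2 _ _ (fun h => hij ((Fintype.equivFin ι).symm.injective h))⟩

theorem edc_bdd {V : Type*} [Fintype V] (G : SimpleGraph V) : BddAbove {m | HasEDC G m} := by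
  refine ⟨Fintype.card (Sym2 V), ?_⟩
  rintro m ⟨c, h1, h2⟩
  choose f hf using fun i => cycle_edge _ (h1 i)
  have : Function.Injective f := by
    intro i j hij
    by_contra hne
    exact h2 i j hne _ (hf i) (hij ▸ hf j)
  simpa using Fintype.card_le_of_injective f this

theorem edc_phi {V : Type*} [Fintype V] (G : SimpleGraph V) : HasEDC G (phi G) :=
  Nat.sSup_mem (s := {m | HasEDC G m}) ⟨0, ⟨fun i => i.elim0, fun i => i.elim0, fun i => i.elim0⟩⟩
    (edc_bdd G)

theorem le_phi {V : Type*} [Fintype V] (G : SimpleGraph V) {m : ℕ} (h : HasEDC G m) : m ≤ phi G :=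
  le_csSup (edc_bdd G) h

theorem edge_some {V : Type*} (H : SimpleGraph V) (e : Sym2 (Option V))
    (he : e ∈ (joinK1 H).edgeSet) : ∃ u, some u ∈ e := by
  induction e with
  | _ a b =>
    cases a with
    | some a => exact ⟨a, by simp⟩
    | none =>
      cases b with
      | some b => exact ⟨b, by simp⟩
      | none => exact absurd rfl (SimpleGraph.Adj.ne ((SimpleGraph.mem_edgeSet _).1 he))

theorem mem_of_map {V : Type*} (s : Set V) (H : SimpleGraph V) (e : Sym2 (Option s)) (u : V)
    (h : some u ∈ e.map (incl H s)) : u ∈ s := by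
  rw [Sym2.mem_map] at h
  obtain ⟨a, _, ha⟩ := h
  cases a with
  | none => cases ha
  | some a =>
    have : (a : V) = u := Option.some.inj ha
    exact this ▸ a.2

theorem phi_le {V : Type*} [Fintype V] (H : SimpleGraph V) :
    phi (joinK1 H) ≤ ∑ c : H.ConnectedComponent, phi (joinK1 (H.induce c.supp)) := by
  obtain ⟨c, h1, h2⟩ := edc_phi (joinK1 H)
  choose C hC using fun i => cycle_comp H _ (h1 i)
  have key : ∀ i, ∃ d : Σ v, (joinK1 (H.induce (C i).supp)).Walk v v,
      d.2.IsCycle ∧ (c i).2.edges = d.2.edges.map (Sym2.map (incl H (C i).supp)) := by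
    intro i
    have hx : ∃ a : Option (C i).supp, incl H (C i).supp a = (c i).1 := by
      have hs := (c i).2.start_mem_support
      rcases hx : (c i).1 with _ | u
      · exact ⟨none, rfl⟩
      · have hu : some u ∈ (c i).2.support := by
          have := congrArg (fun z => z ∈ (c i).2.support) hx
          exact this.mp hs
        exact ⟨some ⟨u, hC i u hu⟩, rfl⟩
    obtain ⟨a, ha⟩ := hx
    obtain ⟨w', hw'⟩ := lift_walk H (C i).supp (c i).2 (hC i) a a ha ha
    refine ⟨⟨a, w'⟩, ?_, ?_⟩
    · have := h1 i
      rw [← hw', SimpleGraph.Walk.isCycle_copy] at this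
      exact (SimpleGraph.Walk.isCycle_map_iff_of_injective (incl_inj H _)).1 this
    · rw [← hw', SimpleGraph.Walk.edges_copy, SimpleGraph.Walk.edges_map]
  have hcard : phi (joinK1 H) = ∑ D : H.ConnectedComponent, Fintype.card {i // C i = D} := by
    rw [← Fintype.card_sigma, Fintype.card_congr (Equiv.sigmaFiberEquiv C), Fintype.card_fin]
  rw [hcard]
  refine Finset.sum_le_sum fun D _ => le_phi _ ?_
  have key2 : ∀ i : {i // C i = D}, ∃ d : Σ v, (joinK1 (H.induce D.supp)).Walk v v,
      d.2.IsCycle ∧ (c i.1).2.edges = d.2.edges.map (Sym2.map (incl H D.supp)) := by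
    rintro ⟨i, rfl⟩
    exact key i
  choose d hd1 hd2 using key2
  refine edc_of_fintype _ d hd1 ?_
  intro i j hij e hi hj
  refine h2 i.1 j.1 (fun h => hij (Subtype.ext h)) (e.map (incl H D.supp)) ?_ ?_
  · rw [hd2]; exact List.mem_map_of_mem hi
  · rw [hd2]; exact List.mem_map_of_mem hj

theorem le_phi_join {V : Type*} [Fintype V] (H : SimpleGraph V) :
    ∑ c : H.ConnectedComponent, phi (joinK1 (H.induce c.supp)) ≤ phi (joinK1 H) := by
  choose c h1 h2 using fun D : H.ConnectedComponent => edc_phi (joinK1 (H.induce D.supp))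
  have := edc_of_fintype (ι := Σ D : H.ConnectedComponent, Fin (phi (joinK1 (H.induce D.supp))))
    (joinK1 H) (fun i => ⟨_, (c i.1 i.2).2.map (incl H i.1.supp)⟩)
    (fun i => (SimpleGraph.Walk.isCycle_map_iff_of_injective (incl_inj H _)).2 (h1 i.1 i.2)) ?_
  · have := le_phi _ this
    simpa [Fintype.card_sigma] using this
  · rintro ⟨D, i⟩ ⟨E, j⟩ hij e he he'
    have hes := SimpleGraph.Walk.edges_subset_edgeSet _ he
    simp only [SimpleGraph.Walk.edges_map, List.mem_map] at he he'
    obtain ⟨a, ha, rfl⟩ := he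
    obtain ⟨b, hb, hab⟩ := he'
    obtain ⟨u, hu⟩ := edge_some H _ hes
    have hD := mem_of_map _ H _ u hu
    have hE := mem_of_map _ H _ u (hab ▸ hu)
    rw [SimpleGraph.ConnectedComponent.mem_supp_iff] at hD hE
    obtain rfl := hD.symm.trans hE
    have hab' : b = a := Sym2.map.injective (incl_inj H _) hab
    subst hab'
    exact h2 _ i j (fun h => hij (by rw [h])) _ ha hb

/-- If `H` has connected components `H₁, …, H_q`, then
`φ(K₁ ∇ H) = φ(K₁ ∇ H₁) + ⋯ + φ(K₁ ∇ H_q)`. -/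
theorem phi_joinK1_eq_sum_components {V : Type*} [Fintype V] (H : SimpleGraph V) :
    phi (joinK1 H) = ∑ c : H.ConnectedComponent, phi (joinK1 (H.induce c.supp)) := by
  exact le_antisymm (phi_le H) (le_phi_join H)

end PaperEDC
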